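/- Let χ : K^× → ℤ/2ℤ be a group homomorphism and n ≥ 1 an integer such that χ(u) = 0 for every u ∈ U_n. Let x ∈ K ∖ {0, e₁, e₂} satisfy χ(x(x−e₁)(x−e₂)) = 0. Then: (a) if v(x) ≤ −n, then χ(x) = 0 and χ(x−e₁) = 0; (b) if v(x) ≥ n, then χ(x) = χ(e₁e₂) and χ(x−e₁) = χ(−e₁). -/

import Mathlib

/-- An additively written, normalized (i.e. surjective onto `ℤ`) discrete
valuation on a field `K`.  All axioms are imposed at nonzero arguments only,
so the value of `v` at `0` is irrelevant.  For a finite extension `K` of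
`ℚ_[p]`, the normalized valuation `v : K^× → ℤ` of the paper is such a
structure. -/
structure DValuation (K : Type*) [Field K] where
  /-- the valuation map -/
  v : K → ℤ
  v_mul : ∀ ⦃x y : K⦄, x ≠ 0 → y ≠ 0 → v (x * y) = v x + v y
  min_le_v_add : ∀ ⦃x y : K⦄, x ≠ 0 → y ≠ 0 → x + y ≠ 0 → min (v x) (v y) ≤ v (x + y)
  v_surj : ∀ m : ℤ, ∃ x : K, x ≠ 0 ∧ v x = m

namespace DValuation

variable {K : Type*} [Field K] (w : DValuation K)

/-- `u ∈ U_m` : `u` is (a unit) congruent to `1` modulo `𝔭^m`; for `m ≥ 1`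
this forces `v u = 0`, i.e. `u ∈ 𝔬^×`. -/
def IsUnit₁ (m : ℤ) (u : K) : Prop :=
  u = 1 ∨ m ≤ w.v (u - 1)

end DValuation

namespace DValuation

variable {K : Type*} [Field K] (w : DValuation K)

lemma v_one' : w.v 1 = 0 := by
  have h := w.v_mul (one_ne_zero (α := K)) (one_ne_zero (α := K))
  rw [mul_one] at h
  omega

lemma v_neg_one' : w.v (-1) = 0 := by
  have h1 : (-1 : K) ≠ 0 := neg_ne_zero.mpr one_ne_zero
  have h := w.v_mul h1 h1
  rw [neg_mul_neg, mul_one, w.v_one'] at h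
  omega

lemma v_neg' {a : K} (ha : a ≠ 0) : w.v (-a) = w.v a := by
  have h1 : (-1 : K) ≠ 0 := neg_ne_zero.mpr one_ne_zero
  have h := w.v_mul h1 ha
  rw [neg_one_mul, w.v_neg_one'] at h
  omega

lemma unit_ne_zero' {e : K} (he : w.IsUnit₁ 1 e) : e ≠ 0 := by
  rintro rfl
  rcases he with h | h
  · exact zero_ne_one h
  · rw [zero_sub, w.v_neg_one'] at h
    omega

lemma v_unit' {e : K} (he : w.IsUnit₁ 1 e) : w.v e = 0 := by
  have h0 := w.unit_ne_zero' he
  by_cases h1 : e = 1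
  · rw [h1, w.v_one']
  have hs : e - 1 ≠ 0 := sub_ne_zero.mpr h1
  have he' : 1 ≤ w.v (e - 1) := he.resolve_left h1
  have A := w.min_le_v_add (one_ne_zero (α := K)) hs (by simpa using h0)
  have B := w.min_le_v_add h0 (neg_ne_zero.mpr hs) (by simp)
  rw [w.v_neg' hs, show e + -(e - 1) = 1 by ring, w.v_one'] at B
  rw [show 1 + (e - 1) = e by ring, w.v_one'] at A
  omega

lemma chi_add' (χ : K → ZMod 2)
    (hχ : ∀ ⦃x y : K⦄, x ≠ 0 → y ≠ 0 → χ (x * y) = χ x + χ y)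
    (n : ℤ) (hvan : ∀ u : K, w.IsUnit₁ n u → χ u = 0)
    {a b : K} (ha : a ≠ 0) (hb : b ≠ 0) (hab : a + b ≠ 0) (h : n ≤ w.v b - w.v a) :
    χ (a + b) = χ a := by
  have hd : b / a ≠ 0 := div_ne_zero hb ha
  have e1 : a + b = a * (1 + b / a) := by field_simp
  have hu : 1 + b / a ≠ 0 := by
    intro h0
    rw [h0, mul_zero] at e1
    exact hab e1
  have hv := w.v_mul ha hd
  rw [mul_div_cancel₀ b ha] at hv
  have hz : χ (1 + b / a) = 0 := by
    apply hvan
    right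
    rw [add_sub_cancel_left]
    omega
  rw [e1, hχ ha hu, hz, add_zero]

end DValuation

/-- **Lemma 1** of the paper.  `K` is a finite extension of `ℚ₂` with
normalized valuation `v`, `e₁, e₂` are distinct `1`-units, `χ : K^× → ℤ/2ℤ`
is a group homomorphism vanishing on `U_n` (`n ≥ 1`).  If
`x ∈ K ∖ {0, e₁, e₂}` satisfies `χ(x(x−e₁)(x−e₂)) = 0` then:
(a) if `v(x) ≤ −n` then `χ(x) = 0` and `χ(x−e₁) = 0`;
(b) if `v(x) ≥ n` then `χ(x) = χ(e₁e₂)` and `χ(x−e₁) = χ(−e₁)`. -/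
theorem chatelet_lemma_one
    (K : Type*) [Field K] [Algebra ℚ_[2] K] [FiniteDimensional ℚ_[2] K]
    (w : DValuation K)
    (hext : ∀ x : ℚ_[2], x ≠ 0 →
      w.v (algebraMap ℚ_[2] K x) = w.v (algebraMap ℚ_[2] K 2) * x.valuation)
    (χ : K → ZMod 2)
    (hχ : ∀ ⦃x y : K⦄, x ≠ 0 → y ≠ 0 → χ (x * y) = χ x + χ y)
    (n : ℕ) (hn : 1 ≤ n)
    (hvan : ∀ u : K, w.IsUnit₁ (n : ℤ) u → χ u = 0)
    (e₁ e₂ : K) (he₁ : w.IsUnit₁ 1 e₁) (he₂ : w.IsUnit₁ 1 e₂) (hee : e₁ ≠ e₂)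
    (x : K) (hx0 : x ≠ 0) (hxe₁ : x ≠ e₁) (hxe₂ : x ≠ e₂)
    (hxf : χ (x * (x - e₁) * (x - e₂)) = 0) :
    (w.v x ≤ -(n : ℤ) → χ x = 0 ∧ χ (x - e₁) = 0) ∧
      ((n : ℤ) ≤ w.v x → χ x = χ (e₁ * e₂) ∧ χ (x - e₁) = χ (-e₁)) := by
  have h10 := w.unit_ne_zero' he₁
  have h20 := w.unit_ne_zero' he₂
  have hv1 := w.v_unit' he₁
  have hv2 := w.v_unit' he₂
  have hs1 := sub_ne_zero.mpr hxe₁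
  have hs2 := sub_ne_zero.mpr hxe₂
  rw [hχ (mul_ne_zero hx0 hs1) hs2, hχ hx0 hs1] at hxf
  have dbl : ∀ t : ZMod 2, t + t = 0 := by decide
  constructor
  · intro h
    have key : ∀ e : K, e ≠ 0 → w.v e = 0 → x - e ≠ 0 → χ (x - e) = χ x := by
      intro e he hv hs
      rw [sub_eq_add_neg] at hs ⊢
      refine w.chi_add' χ hχ n hvan hx0 (neg_ne_zero.mpr he) hs ?_
      rw [w.v_neg' he]
      omega
    rw [key e₁ h10 hv1 hs1, key e₂ h20 hv2 hs2, dbl, zero_add] at hxf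
    exact ⟨hxf, by rw [key e₁ h10 hv1 hs1, hxf]⟩
  · intro h
    have key : ∀ e : K, e ≠ 0 → w.v e = 0 → x - e ≠ 0 → χ (x - e) = χ (-e) := by
      intro e he hv hs
      rw [sub_eq_add_neg, add_comm] at hs ⊢
      refine w.chi_add' χ hχ n hvan (neg_ne_zero.mpr he) hx0 hs ?_
      rw [w.v_neg' he]
      omega
    refine ⟨?_, key e₁ h10 hv1 hs1⟩
    rw [key e₁ h10 hv1 hs1, key e₂ h20 hv2 hs2, add_assoc,
      ← hχ (neg_ne_zero.mpr h10) (neg_ne_zero.mpr h20), neg_mul_neg] at hxf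
    have fin2 : ∀ s t : ZMod 2, s + t = 0 → s = t := by decide
    exact fin2 _ _ hxf
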